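/- Let 0 ≤ d < 4/5. Then (1/(d-1)) ∫₀¹∫₀¹∫₀¹ u^{3-3d} v^{2-d} (1-uv)^{-d} (1-vw)^{-2d} (1-uvw)^{-d} (1-w)^{1-d} ₂F₁(1,d;2-d; v(1-w)/(1-vw)) dw dv du = [Γ(1-d)/((1-d)(2-2d))]·[Γ(3-3d)Γ(4-5d)/(Γ(4-4d)Γ(5-5d))]·₃F₂(2-2d,1,d;3-2d,2-d;1) − [Γ(1-d)³ Γ(4-5d)/(Γ(3-2d)Γ(2-d)Γ(5-5d))]·₃F₂(2-2d,1,2d-1;3-2d,2-d;1). -/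

import Mathlib

open Real MeasureTheory

/-- Pochhammer symbol `(a)_k = a (a+1) ⋯ (a+k-1)` for real `a`. -/
noncomputable def poch (a : ℝ) (k : ℕ) : ℝ := (ascPochhammer ℝ k).eval a

/-- Gaussian hypergeometric function `₂F₁(a,b;c;z)`. -/
noncomputable def hyp2F1 (a b c z : ℝ) : ℝ :=
  ∑' k : ℕ, (poch a k * poch b k) / poch c k * z ^ k / (Nat.factorial k)

/-- Generalized hypergeometric function `₃F₂(a₁,a₂,a₃;b₁,b₂;z)`. -/
noncomputable def hyp3F2 (a₁ a₂ a₃ b₁ b₂ z : ℝ) : ℝ :=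
  ∑' k : ℕ, (poch a₁ k * poch a₂ k * poch a₃ k) / (poch b₁ k * poch b₂ k) * z ^ k /
    (Nat.factorial k)

/-- Generalized hypergeometric function `₄F₃(a₁,a₂,a₃,a₄;b₁,b₂,b₃;z)`. -/
noncomputable def hyp4F3 (a₁ a₂ a₃ a₄ b₁ b₂ b₃ z : ℝ) : ℝ :=
  ∑' k : ℕ, (poch a₁ k * poch a₂ k * poch a₃ k * poch a₄ k) /
    (poch b₁ k * poch b₂ k * poch b₃ k) * z ^ k / (Nat.factorial k)

lemma hs_congr {f g : ℕ → ℝ} {a : ℝ} (h : ∀ k, f k = g k) (hg : HasSum g a) : HasSum f a := by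
  rwa [funext h]

lemma poch_zero (a : ℝ) : poch a 0 = 1 := by simp [poch]

lemma poch_succ (a : ℝ) (k : ℕ) : poch a (k+1) = poch a k * (a + k) := by
  simp [poch, ascPochhammer_succ_eval]

lemma poch_pos {a : ℝ} (ha : 0 < a) (k : ℕ) : 0 < poch a k := ascPochhammer_pos k a ha

lemma poch_one (k : ℕ) : poch 1 k = (Nat.factorial k : ℝ) := by
  simp [poch, ascPochhammer_eval_one]

lemma poch_div_shift {c : ℝ} (hc : 0 < c) (k : ℕ) : poch c k / poch (c+1) k = c / (c + k) := by
  induction k with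
  | zero => simp [poch_zero, hc.ne']
  | succ k ih =>
    have h1 := poch_pos (show 0 < c + 1 by linarith) k
    have h2 : 0 < c + k := by positivity
    have h3 : 0 < c + 1 + k := by positivity
    rw [poch_succ, poch_succ, mul_div_mul_comm, ih]
    push_cast
    field_simp
    ring

lemma gamma_poch {c : ℝ} (hc : 0 < c) (k : ℕ) : Real.Gamma (c + k) = poch c k * Real.Gamma c := by
  induction k with
  | zero => simp [poch_zero]
  | succ k ih =>
    have h2 : 0 < c + k := by positivity
    push_cast
    rw [← add_assoc, Real.Gamma_add_one h2.ne', ih, poch_succ]; ring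

lemma hyp2F1_eq (b c z : ℝ) : hyp2F1 1 b c z = ∑' k : ℕ, poch b k / poch c k * z ^ k := by
  unfold hyp2F1
  congr 1; funext k
  rw [poch_one]
  have : (Nat.factorial k : ℝ) ≠ 0 := by positivity
  field_simp

lemma hyp3F2_eq {a : ℝ} (ha : 0 < a) (b c : ℝ) :
    hyp3F2 a 1 b (a+1) c 1 = ∑' k : ℕ, poch b k / poch c k * (a / (a + k)) := by
  unfold hyp3F2
  congr 1; funext k
  rw [poch_one, ← poch_div_shift ha]
  have : (Nat.factorial k : ℝ) ≠ 0 := by positivity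
  have h1 := poch_pos (show 0 < a + 1 by linarith) k
  by_cases hc : poch c k = 0
  · simp [hc]
  field_simp
  simp

/-- `|r_k| ≤ 1` -/
lemma ratio_le {b c : ℝ} (hb : -1 ≤ b) (hc : 1 ≤ c) (hbc : b < c) (k : ℕ) :
    |poch b k / poch c k| ≤ 1 := by
  induction k with
  | zero => simp [poch_zero]
  | succ k ih =>
    rw [poch_succ, poch_succ, mul_div_mul_comm, abs_mul]
    have hk : (0:ℝ) ≤ k := by positivity
    have : |(b + k) / (c + k)| ≤ 1 := by
      rw [abs_div, div_le_one (abs_pos.2 (by linarith)), abs_of_pos (show 0 < c + k by linarith)]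
      rw [abs_le]; constructor <;> linarith
    calc _ ≤ (1:ℝ) * 1 := by gcongr
      _ = 1 := by ring

lemma ratio_summable {b c : ℝ} (hb : -1 ≤ b) (hc : 1 ≤ c) (hbc : b < c) :
    Summable (fun k : ℕ => |poch b k / poch c k| / (c + k)) := by
  rw [← summable_nat_add_iff 1]
  set r : ℕ → ℝ := fun k => |poch b (k+1) / poch c (k+1)| with hr
  have hstep : ∀ k, r k - r (k+1) = (c - b) * (r k / (c + (k+1 : ℕ))) := by
    intro k
    have hk : (0:ℝ) ≤ k := by positivity
    have : r (k+1) = r k * ((b + (k+1 : ℕ)) / (c + (k+1 : ℕ))) := by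
      simp only [hr]
      rw [poch_succ b (k+1), poch_succ c (k+1), mul_div_mul_comm, abs_mul]
      congr 1
      rw [abs_of_nonneg]
      push_cast
      apply div_nonneg <;> linarith
    rw [this]
    have : c + (k+1 : ℕ) ≠ 0 := by push_cast; linarith
    field_simp
    ring
  have hs : Summable (fun k : ℕ => (c - b) * (r k / (c + (k+1 : ℕ)))) := by
    apply summable_of_sum_range_le (c := r 0)
    · intro k
      have : 0 < c + (k+1 : ℕ) := by positivity
      have : 0 ≤ r k := abs_nonneg _
      have : 0 < c - b := by linarith
      positivity
    · intro n
      simp_rw [← hstep]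
      rw [Finset.sum_range_sub']
      have : 0 ≤ r n := abs_nonneg _
      linarith
  exact (summable_mul_left_iff (show c - b ≠ 0 by linarith)).1 hs

lemma binom_hasSum (b : ℝ) {x : ℝ} (hx : |x| < 1) :
    HasSum (fun k : ℕ => poch b k / (Nat.factorial k) * x ^ k) ((1 - x) ^ (-b)) := by
  have h := (Real.one_div_one_sub_rpow_hasFPowerSeriesOnBall_zero b).hasSum (y := x)
    (by simpa [enorm_eq_nnnorm, ← NNReal.coe_lt_coe] using hx)
  have hx' : 0 ≤ 1 - x := by have := abs_lt.1 hx; linarith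
  simp only [zero_add, FormalMultilinearSeries.ofScalars_apply_eq, smul_eq_mul] at h
  rw [Real.rpow_neg hx', ← one_div]
  refine hs_congr (fun k => ?_) h
  have h1 : Ring.choose (b + k - 1) k = Ring.multichoose b k := by
    rw [Ring.choose]; congr 1; ring
  rw [h1]
  congr 1
  rw [div_eq_iff (by positivity), mul_comm, ← nsmul_eq_mul,
    Ring.factorial_nsmul_multichoose_eq_ascPochhammer, Polynomial.ascPochhammer_smeval_eq_eval]
  rfl

lemma lint_series {μ : Measure ℝ} {F : ℕ → ℝ → ℝ} {f : ℝ → ℝ} {S : ℝ}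
    (hF : ∀ k, Integrable (F k) μ) (hs : Summable fun k => ∫ x, ‖F k x‖ ∂μ)
    (hf0 : ∀ᵐ x ∂μ, 0 ≤ f x) (hpt : ∀ᵐ x ∂μ, HasSum (fun k => F k x) (f x))
    (hS : ∑' k, ∫ x, F k x ∂μ = S) :
    0 ≤ S ∧ ∫⁻ x, ENNReal.ofReal (f x) ∂μ = ENNReal.ofReal S := by
  have hm : AEStronglyMeasurable f μ := by
    refine aestronglyMeasurable_of_tendsto_ae Filter.atTop
      (f := fun n x => ∑ k ∈ Finset.range n, F k x) (fun n => ?_) ?_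
    · exact (integrable_finsetSum _ (fun k _ => hF k)).aestronglyMeasurable
    · filter_upwards [hpt] with x hx using hx.tendsto_sum_nat
  have hi : Integrable f μ := by
    refine ⟨hm, ?_⟩
    have h1 : ∫⁻ x, ‖f x‖ₑ ∂μ ≤ ∫⁻ x, ∑' k, ‖F k x‖ₑ ∂μ := by
      refine lintegral_mono_ae ?_
      filter_upwards [hpt] with x hx
      rw [← hx.tsum_eq]
      exact enorm_tsum_le_tsum_enorm
    refine lt_of_le_of_lt h1 ?_
    rw [lintegral_tsum (fun k => (hF k).aestronglyMeasurable.enorm)]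
    have h2 : ∀ k, ∫⁻ x, ‖F k x‖ₑ ∂μ = ENNReal.ofReal (∫ x, ‖F k x‖ ∂μ) := fun k =>
      (ofReal_integral_norm_eq_lintegral_enorm (hF k)).symm
    simp_rw [h2]
    rw [← ENNReal.ofReal_tsum_of_nonneg (fun k => by positivity) hs]
    exact ENNReal.ofReal_lt_top
  have hfS : ∫ x, f x ∂μ = S := by
    rw [← hS, (hasSum_integral_of_summable_integral_norm hF hs).tsum_eq]
    apply integral_congr_ae
    filter_upwards [hpt] with x hx using hx.tsum_eq.symm
  rw [← ofReal_integral_eq_lintegral_ofReal hi hf0, hfS]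
  exact ⟨hfS ▸ integral_nonneg_of_ae hf0, rfl⟩

lemma lint_beta {a b : ℝ} (ha : 0 < a) (hb : 0 < b) :
    ∫⁻ x in Set.Ioo (0:ℝ) 1, ENNReal.ofReal (x ^ (a-1) * (1 - x) ^ (b-1))
      = ENNReal.ofReal (Real.Gamma a * Real.Gamma b / Real.Gamma (a+b)) := by
  have h := ProbabilityTheory.lintegral_betaPDF_eq_one ha hb
  have hp := ProbabilityTheory.beta_pos ha hb
  rw [ProbabilityTheory.lintegral_betaPDF] at h
  simp_rw [mul_assoc, ENNReal.ofReal_mul (one_div_pos.2 hp).le] at h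
  rw [lintegral_const_mul' _ _ ENNReal.ofReal_ne_top] at h
  have h2 : ENNReal.ofReal (ProbabilityTheory.beta a b) * ENNReal.ofReal (1 / ProbabilityTheory.beta a b) = 1 := by
    rw [← ENNReal.ofReal_mul hp.le, mul_one_div_cancel hp.ne', ENNReal.ofReal_one]
  calc _ = (ENNReal.ofReal (ProbabilityTheory.beta a b) * ENNReal.ofReal (1 / ProbabilityTheory.beta a b)) * _ := by rw [h2, one_mul]
    _ = _ := by rw [mul_assoc, h, mul_one]; rfl

lemma int_beta {a b : ℝ} (ha : 0 < a) (hb : 0 < b) :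
    IntegrableOn (fun x : ℝ => x ^ (a-1) * (1 - x) ^ (b-1)) (Set.Ioo (0:ℝ) 1) ∧
    ∫ x in Set.Ioo (0:ℝ) 1, x ^ (a-1) * (1 - x) ^ (b-1)
      = Real.Gamma a * Real.Gamma b / Real.Gamma (a+b) := by
  have h := lint_beta ha hb
  have hp := (ProbabilityTheory.beta_pos ha hb).le
  have h0 : 0 ≤ᵐ[volume.restrict (Set.Ioo (0:ℝ) 1)] fun x : ℝ => x ^ (a-1) * (1 - x) ^ (b-1) := by
    refine ae_restrict_of_forall_mem measurableSet_Ioo (fun x hx ↦ ?_)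
    have := hx.1
    have : 0 < 1 - x := by linarith [hx.2]
    positivity
  have hm : AEStronglyMeasurable (fun x : ℝ => x ^ (a-1) * (1 - x) ^ (b-1)) (volume.restrict (Set.Ioo (0:ℝ) 1)) :=
    Measurable.aestronglyMeasurable (by fun_prop)
  constructor
  · refine ⟨hm, ?_⟩
    rw [hasFiniteIntegral_iff_ofReal h0, h]; exact ENNReal.ofReal_lt_top
  · rw [integral_eq_lintegral_of_nonneg_ae h0 hm, h]; exact ENNReal.toReal_ofReal hp

lemma euler_rep {d β x : ℝ} (hd : d < 1) (hβ : -1 ≤ β) (hβ2 : β < 2 - d)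
    (hx0 : 0 ≤ x) (hx1 : x < 1) :
    0 ≤ hyp2F1 1 β (2-d) x / (1-d) ∧
    ∫⁻ t in Set.Ioo (0:ℝ) 1, ENNReal.ofReal ((1 - t) ^ (-d) * (1 - x * t) ^ (-β))
      = ENNReal.ofReal (hyp2F1 1 β (2-d) x / (1-d)) := by
  have hΓ : 0 < Real.Gamma (1-d) := Real.Gamma_pos_of_pos (by linarith)
  have hb : ∀ k : ℕ, Real.Gamma ((k:ℝ)+1) * Real.Gamma (1-d) / Real.Gamma ((k:ℝ)+1+(1-d))
      = (Nat.factorial k) / poch (2-d) k / (1-d) := by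
    intro k
    have h1 : (k:ℝ)+1+(1-d) = (2 - d) + k := by ring
    have h2 : Real.Gamma (2-d) = (1-d) * Real.Gamma (1-d) := by
      rw [← Real.Gamma_add_one (by linarith)]; congr 1; ring
    have h3 := poch_pos (show 0 < 2 - d by linarith) k
    have h4 : (1:ℝ) - d ≠ 0 := by linarith
    rw [h1, gamma_poch (by linarith), h2, Real.Gamma_nat_eq_factorial]
    field_simp
  have hB := fun k : ℕ => int_beta (a := (k:ℝ)+1) (b := 1-d) (by positivity) (by linarith)
  apply lint_series (F := fun k t => (poch β k / (Nat.factorial k) * x ^ k) *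
    (t ^ ((k:ℝ)+1-1) * (1 - t) ^ (1-d-1)))
  · intro k
    exact (hB k).1.const_mul _
  · have : ∀ k : ℕ, ∫ t in Set.Ioo (0:ℝ) 1, ‖(poch β k / (Nat.factorial k) * x ^ k) *
        (t ^ ((k:ℝ)+1-1) * (1 - t) ^ (1-d-1))‖ = |poch β k / poch (2-d) k| / (1-d) * x ^ k := by
      intro k
      have h3 := poch_pos (show 0 < 2 - d by linarith) k
      simp_rw [norm_mul (poch β k / (Nat.factorial k) * x ^ k)]
      rw [integral_const_mul]
      have : ∫ t in Set.Ioo (0:ℝ) 1, ‖t ^ ((k:ℝ)+1-1) * (1 - t) ^ (1-d-1)‖ =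
          ∫ t in Set.Ioo (0:ℝ) 1, t ^ ((k:ℝ)+1-1) * (1 - t) ^ (1-d-1) := by
        refine setIntegral_congr_fun measurableSet_Ioo (fun t ht => ?_)
        have := ht.1
        have : 0 < 1 - t := by linarith [ht.2]
        exact Real.norm_of_nonneg (by positivity)
      rw [this, (hB k).2, hb, norm_mul, norm_div, norm_pow, Real.norm_eq_abs, Real.norm_of_nonneg hx0,
        Real.norm_of_nonneg (show (0:ℝ) ≤ (Nat.factorial k) by positivity), abs_div, abs_of_pos h3]
      have : (Nat.factorial k : ℝ) ≠ 0 := by positivity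
      field_simp
    simp_rw [this]
    refine Summable.of_nonneg_of_le (f := fun k : ℕ => 1 / (1-d) * x ^ k) ?_ ?_
      ((summable_geometric_of_lt_one hx0 hx1).mul_left _)
    · intro k
      have : 0 < 1 - d := by linarith
      positivity
    · intro k
      have : 0 < 1 - d := by linarith
      have := ratio_le hβ (show 1 ≤ 2 - d by linarith) hβ2 k
      gcongr
  · refine ae_restrict_of_forall_mem measurableSet_Ioo (fun t ht ↦ ?_)
    have : 0 < 1 - t := by linarith [ht.2]
    have : 0 < 1 - x * t := by nlinarith [ht.1, ht.2]
    positivity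
  · refine ae_restrict_of_forall_mem measurableSet_Ioo (fun t ht ↦ ?_)
    have h := (binom_hasSum β (x := x * t) (by
      rw [abs_of_nonneg (mul_nonneg hx0 ht.1.le)]; nlinarith [ht.1, ht.2])).mul_left ((1 - t) ^ (-d))
    refine hs_congr (fun k => ?_) h
    rw [show (k:ℝ)+1-1 = k by ring, Real.rpow_natCast, mul_pow, show 1 - d - 1 = -d by ring]
    ring
  · rw [hyp2F1_eq, ← tsum_div_const]
    congr 1; funext k
    rw [integral_const_mul, (hB k).2, hb]
    have : (Nat.factorial k : ℝ) ≠ 0 := by positivity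
    field_simp

lemma second_int {d β : ℝ} (hd : d < 1) (hβ : -1 ≤ β) (hβ2 : β < 2 - d) :
    0 ≤ hyp3F2 (2-2*d) 1 β (3-2*d) (2-d) 1 / (2-2*d) ∧
    ∫⁻ x in Set.Ioo (0:ℝ) 1, ENNReal.ofReal (x ^ (1-2*d) * hyp2F1 1 β (2-d) x)
      = ENNReal.ofReal (hyp3F2 (2-2*d) 1 β (3-2*d) (2-d) 1 / (2-2*d)) := by
  have hB := fun k : ℕ => int_beta (a := 2-2*d+k) (b := 1) (by have : (0:ℝ) ≤ k := by positivity
                                                               linarith) one_pos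
  have hb : ∀ k : ℕ, Real.Gamma (2-2*d+k) * Real.Gamma 1 / Real.Gamma (2-2*d+k+1)
      = 1 / (2-2*d+k) := by
    intro k
    have h0 : (0:ℝ) < 2-2*d+k := by have : (0:ℝ) ≤ k := by positivity
                                    linarith
    have := Real.Gamma_pos_of_pos h0
    rw [Real.Gamma_add_one h0.ne', Real.Gamma_one]
    generalize 2-2*d+(k:ℝ) = a at *
    field_simp
  apply lint_series (F := fun k x => (poch β k / poch (2-d) k) *
    (x ^ (2-2*d+k-1) * (1 - x) ^ ((1:ℝ)-1)))
  · intro k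
    exact (hB k).1.const_mul _
  · have : ∀ k : ℕ, ∫ t in Set.Ioo (0:ℝ) 1, ‖(poch β k / poch (2-d) k) *
        (t ^ (2-2*d+k-1) * (1 - t) ^ ((1:ℝ)-1))‖ = |poch β k / poch (2-d) k| / (2-2*d+k) := by
      intro k
      simp_rw [norm_mul (poch β k / poch (2-d) k)]
      rw [integral_const_mul]
      have : ∫ t in Set.Ioo (0:ℝ) 1, ‖t ^ (2-2*d+k-1) * (1 - t) ^ ((1:ℝ)-1)‖ =
          ∫ t in Set.Ioo (0:ℝ) 1, t ^ (2-2*d+k-1) * (1 - t) ^ ((1:ℝ)-1) := by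
        refine setIntegral_congr_fun measurableSet_Ioo (fun t ht => ?_)
        have := ht.1
        have : 0 < 1 - t := by linarith [ht.2]
        exact Real.norm_of_nonneg (by positivity)
      rw [this, (hB k).2, hb, Real.norm_eq_abs]
      ring
    simp_rw [this]
    have hs := (ratio_summable hβ (show 1 ≤ 2 - d by linarith) hβ2).mul_left ((2-d)/(2-2*d) + 1)
    refine Summable.of_nonneg_of_le ?_ ?_ hs
    · intro k
      have : (0:ℝ) < 2-2*d+k := by have : (0:ℝ) ≤ k := by positivity
                                   linarith
      positivity
    · intro k
      have hk : (0:ℝ) ≤ k := by positivity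
      have h1 : (0:ℝ) < 2-2*d+k := by linarith
      have h2 : (0:ℝ) < 2-d+k := by linarith
      have h3 : (0:ℝ) < 2-2*d := by linarith
      have h4 : (0:ℝ) < 2-d := by linarith
      have h5 : 2-d+k ≤ ((2-d)/(2-2*d) + 1) * (2-2*d+k) := by
        have e : ((2-d)/(2-2*d) + 1) * (2-2*d+k) = (2 - d) + (2-d)/(2-2*d)*k + (2-2*d) + k := by
          generalize 2-2*d = a at *
          field_simp; ring
        rw [e]
        have : 0 ≤ (2-d)/(2-2*d)*k := by positivity
        linarith
      rw [mul_div_assoc', div_le_div_iff₀ h1 h2]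
      have := mul_le_mul_of_nonneg_left h5 (abs_nonneg (poch β k / poch (2-d) k))
      linarith
  · refine ae_restrict_of_forall_mem measurableSet_Ioo (fun t ht ↦ ?_)
    have h := (euler_rep hd hβ hβ2 ht.1.le ht.2).1
    have h2 : 0 ≤ hyp2F1 1 β (2-d) t := by
      rw [le_div_iff₀ (by linarith)] at h; linarith
    have := ht.1
    positivity
  · refine ae_restrict_of_forall_mem measurableSet_Ioo (fun t ht ↦ ?_)
    have hs : Summable (fun k : ℕ => poch β k / poch (2-d) k * t ^ k) := by
      refine Summable.of_norm_bounded (summable_geometric_of_lt_one ht.1.le ht.2) (fun k => ?_)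
      rw [norm_mul, Real.norm_eq_abs, norm_pow, Real.norm_of_nonneg ht.1.le]
      have := ratio_le hβ (show 1 ≤ 2 - d by linarith) hβ2 k
      have h0 : 0 ≤ t ^ k := pow_nonneg ht.1.le k
      nlinarith
    have h := hs.hasSum.mul_left (t ^ (1-2*d))
    rw [hyp2F1_eq]
    refine hs_congr (fun k => ?_) h
    rw [show 2-2*d+k-1 = (1-2*d)+(k:ℝ) by ring, Real.rpow_add ht.1, Real.rpow_natCast]
    simp
    ring
  · rw [show 3-2*d = (2-2*d)+1 by ring, hyp3F2_eq (by linarith), ← tsum_div_const]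
    congr 1; funext k
    rw [integral_const_mul, (hB k).2, hb]
    have hk : (0:ℝ) ≤ k := by positivity
    have h1 : (2-2*d+k) ≠ 0 := by linarith
    have h3 : 2-2*d ≠ 0 := by linarith
    generalize 2-2*d = a at *
    field_simp

lemma T_eval {d β : ℝ} (hd : d < 1) (hβ : -1 ≤ β) (hβ2 : β < 2 - d) :
    0 ≤ hyp3F2 (2-2*d) 1 β (3-2*d) (2-d) 1 / (2-2*d) ∧
    ∫⁻ x in Set.Ioo (0:ℝ) 1, ENNReal.ofReal (x ^ (1-2*d)) *
      ∫⁻ t in Set.Ioo (0:ℝ) 1, ENNReal.ofReal ((1 - t) ^ (-d) * (1 - x * t) ^ (-β))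
      = ENNReal.ofReal (hyp3F2 (2-2*d) 1 β (3-2*d) (2-d) 1 / (2-2*d) / (1-d)) := by
  refine ⟨(second_int hd hβ hβ2).1, ?_⟩
  have : ∫⁻ x in Set.Ioo (0:ℝ) 1, ENNReal.ofReal (x ^ (1-2*d)) *
      ∫⁻ t in Set.Ioo (0:ℝ) 1, ENNReal.ofReal ((1 - t) ^ (-d) * (1 - x * t) ^ (-β))
      = ∫⁻ x in Set.Ioo (0:ℝ) 1, ENNReal.ofReal (x ^ (1-2*d) * hyp2F1 1 β (2-d) x) *
        ENNReal.ofReal (1/(1-d)) := by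
    refine setLIntegral_congr_fun measurableSet_Ioo (fun x hx => ?_)
    have h1 : 0 < 1 - d := by linarith
    have h := (euler_rep hd hβ hβ2 hx.1.le hx.2)
    have hx0 := hx.1
    rw [h.2, ← ENNReal.ofReal_mul (by positivity), ← ENNReal.ofReal_mul' (by positivity)]
    congr 1; ring
  rw [this, lintegral_mul_const' _ _ ENNReal.ofReal_ne_top, (second_int hd hβ hβ2).2,
    ← ENNReal.ofReal_mul (second_int hd hβ hβ2).1]
  congr 1; ring

open scoped ENNReal

noncomputable def gk (d x : ℝ) : ℝ≥0∞ := if 0 < x then ENNReal.ofReal (x ^ (-d)) else 0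
noncomputable def hk (x : ℝ) : ℝ≥0∞ := if 0 < x then 1 else 0

@[fun_prop] lemma measurable_gk (d : ℝ) : Measurable (gk d) :=
  Measurable.ite measurableSet_Ioi (by fun_prop) (by fun_prop)

@[fun_prop] lemma measurable_hk : Measurable hk :=
  Measurable.ite measurableSet_Ioi (by fun_prop) (by fun_prop)

lemma gk_pos {d x : ℝ} (hx : 0 < x) : gk d x = ENNReal.ofReal (x ^ (-d)) := if_pos hx
lemma hk_pos {x : ℝ} (hx : 0 < x) : hk x = 1 := if_pos hx
lemma gk_ne {d x : ℝ} (h : gk d x ≠ 0) : 0 < x := by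
  by_contra hx; exact h (if_neg hx)
lemma hk_ne {x : ℝ} (h : hk x ≠ 0) : 0 < x := by
  by_contra hx; exact h (if_neg hx)

lemma gk_mul {d c : ℝ} (hc : 0 < c) (x : ℝ) : gk d (c * x) = ENNReal.ofReal (c ^ (-d)) * gk d x := by
  by_cases hx : 0 < x
  · rw [gk_pos hx, gk_pos (by positivity), Real.mul_rpow hc.le hx.le, ENNReal.ofReal_mul (by positivity)]
  · have : ¬ 0 < c * x := by rwa [mul_pos_iff_of_pos_left hc]
    rw [gk, gk, if_neg hx, if_neg this, mul_zero]

lemma hk_mul {c : ℝ} (hc : 0 < c) (x : ℝ) : hk (c * x) = hk x := by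
  simp only [hk, mul_pos_iff_of_pos_left hc]

lemma laffine (f : ℝ → ℝ≥0∞) (b : ℝ) {c : ℝ} (hc : 0 < c) :
    ∫⁻ x, f x = ENNReal.ofReal c * ∫⁻ x, f (b + c * x) := by
  have h1 : ∫⁻ x, f x = ∫⁻ x, f (b + x) := (lintegral_add_left_eq_self (μ := volume) f b).symm
  rw [h1]
  conv_lhs => rw [← Real.smul_map_volume_mul_left hc.ne']
  rw [lintegral_smul_measure, abs_of_pos hc, smul_eq_mul]
  congr 1
  exact lintegral_map_equiv (fun x => f (b + x)) (Homeomorph.mulLeft₀ c hc.ne').toMeasurableEquiv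

lemma lscale (f : ℝ → ℝ≥0∞) {c : ℝ} (hc : 0 < c) :
    ∫⁻ x, f x = ENNReal.ofReal c * ∫⁻ x, f (c * x) := by
  simpa using laffine f 0 hc

lemma lrefl (f : ℝ → ℝ≥0∞) : ∫⁻ x, f x = ∫⁻ x, f (1 - x) :=
  (lintegral_sub_left_eq_self (μ := volume) f 1).symm

lemma lred {f F : ℝ → ℝ≥0∞} {S : Set ℝ} (hS : MeasurableSet S) (h0 : ∀ x, x ∉ S → f x = 0)
    (h1 : ∀ x ∈ S, f x = F x) : ∫⁻ x, f x = ∫⁻ x in S, F x := by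
  rw [← lintegral_indicator hS]
  refine lintegral_congr fun x => ?_
  by_cases hx : x ∈ S
  · rw [Set.indicator_of_mem hx, h1 x hx]
  · rw [Set.indicator_of_notMem hx, h0 x hx]

lemma meas1 {f : ℝ → ℝ → ℝ≥0∞} (hf : Measurable fun p : ℝ × ℝ => f p.1 p.2) :
    Measurable fun a => ∫⁻ b, f a b := Measurable.lintegral_prod_right hf

lemma meas2 {f : ℝ → ℝ → ℝ → ℝ≥0∞} (hf : Measurable fun p : ℝ × ℝ × ℝ => f p.1 p.2.1 p.2.2) :
    Measurable fun p : ℝ × ℝ => ∫⁻ b, f p.1 p.2 b := by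
  apply Measurable.lintegral_prod_right (f := fun (p : ℝ × ℝ) b => f p.1 p.2 b)
  exact hf.comp (g := fun p : ℝ × ℝ × ℝ => f p.1 p.2.1 p.2.2)
    (f := fun q : (ℝ × ℝ) × ℝ => (q.1.1, q.1.2, q.2)) (by fun_prop)

lemma lswap {f : ℝ → ℝ → ℝ≥0∞} (hf : Measurable fun p : ℝ × ℝ => f p.1 p.2) :
    ∫⁻ a, ∫⁻ b, f a b = ∫⁻ b, ∫⁻ a, f a b :=
  lintegral_lintegral_swap (Measurable.aemeasurable hf)

noncomputable def JJ (d y1 y2 y3 y4 : ℝ) : ℝ≥0∞ :=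
  hk y1 * hk (y2 - y1) * hk (y3 - y4) * hk (1 - y3) * gk d y2 * gk d (y4 - y2) * gk d (y4 - y1) *
    gk d (y3 - y1) * gk d y3

noncomputable def KK (d a b c : ℝ) : ℝ≥0∞ :=
  hk a * hk (b - a) * hk (1 - c) * gk d b * gk d (c - b) * gk d (c - a) * gk d (1 - a)

noncomputable def QQ (d a b c : ℝ) : ℝ≥0∞ :=
  hk a * hk (a - b) * hk (1 - c) * gk d b * gk d (c - b) * gk d (c - a) * gk d (1 - a)

noncomputable def PP (d a b c : ℝ) : ℝ≥0∞ :=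
  hk a * hk (1 - c) * gk d b * gk d (c - b) * gk d (c - a) * gk d (1 - a)

lemma JJ_ne {d y1 y2 y3 y4 : ℝ} (h : JJ d y1 y2 y3 y4 ≠ 0) :
    0 < y1 ∧ y1 < y2 ∧ y2 < y4 ∧ y4 < y3 ∧ y3 < 1 := by
  simp only [JJ, mul_ne_zero_iff] at h
  obtain ⟨⟨⟨⟨⟨⟨⟨⟨h1, h2⟩, h3⟩, h4⟩, h5⟩, h6⟩, h7⟩, h8⟩, h9⟩ := h
  have := hk_ne h1
  have := hk_ne h2
  have := hk_ne h3
  have := hk_ne h4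
  have := gk_ne h6
  refine ⟨?_, ?_, ?_, ?_, ?_⟩ <;> linarith

lemma K_add_Q (d : ℝ) : (∫⁻ a, ∫⁻ b, ∫⁻ c, KK d a b c) + ∫⁻ a, ∫⁻ b, ∫⁻ c, QQ d a b c
    = ∫⁻ a, ∫⁻ b, ∫⁻ c, PP d a b c := by
  have hK : Measurable fun p : ℝ × ℝ × ℝ => KK d p.1 p.2.1 p.2.2 := by unfold KK; fun_prop
  have hQ : Measurable fun p : ℝ × ℝ × ℝ => QQ d p.1 p.2.1 p.2.2 := by unfold QQ; fun_prop
  rw [← lintegral_add_left (meas1 (meas2 hK))]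
  refine lintegral_congr fun a => ?_
  have hK1 : Measurable fun b => ∫⁻ c, KK d a b c :=
    (meas2 hK).comp (f := fun b => (a, b)) (by fun_prop)
  rw [← lintegral_add_left hK1]
  refine lintegral_congr_ae ?_
  have : ∀ᵐ b : ℝ, b ≠ a := by simp [ae_iff]
  filter_upwards [this] with b hb
  have hK2 : Measurable fun c => KK d a b c := hK.comp (f := fun c => (a, b, c)) (by fun_prop)
  rw [← lintegral_add_left hK2]
  refine lintegral_congr fun c => ?_
  unfold KK QQ PP
  rcases lt_or_gt_of_ne hb with h | h
  · have h1 : hk (b - a) = 0 := if_neg (by linarith)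
    have h2 : hk (a - b) = 1 := if_pos (by linarith)
    rw [h1, h2]; ring
  · have h1 : hk (b - a) = 1 := if_pos (by linarith)
    have h2 : hk (a - b) = 0 := if_neg (by linarith)
    rw [h1, h2]; ring

lemma JK {d : ℝ} (hd : d < 4/5) : ∫⁻ y1, ∫⁻ y2, ∫⁻ y3, ∫⁻ y4, JJ d y1 y2 y3 y4
    = ENNReal.ofReal (1 / (4 - 5 * d)) * ∫⁻ a, ∫⁻ b, ∫⁻ c, KK d a b c := by
  have hm4 : Measurable fun p : (ℝ × ℝ × ℝ) × ℝ => JJ d p.1.1 p.1.2.1 p.1.2.2 p.2 := by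
    unfold JJ; fun_prop
  have hm : Measurable fun p : ℝ × ℝ × ℝ => ∫⁻ y4, JJ d p.1 p.2.1 p.2.2 y4 :=
    Measurable.lintegral_prod_right hm4
  have hm' : Measurable fun p : ℝ × ℝ × ℝ => ∫⁻ y4, JJ d p.1 p.2.2 p.2.1 y4 :=
    hm.comp (f := fun p : ℝ × ℝ × ℝ => (p.1, p.2.2, p.2.1)) (by fun_prop)
  have e1 : ∫⁻ y1, ∫⁻ y2, ∫⁻ y3, ∫⁻ y4, JJ d y1 y2 y3 y4
      = ∫⁻ y1, ∫⁻ y3, ∫⁻ y2, ∫⁻ y4, JJ d y1 y2 y3 y4 := by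
    refine lintegral_congr fun y1 => lswap ?_
    exact hm.comp (f := fun p : ℝ × ℝ => (y1, p.1, p.2)) (by fun_prop)
  rw [e1, lswap (meas2 (f := fun a b c => ∫⁻ y4, JJ d a c b y4) hm')]
  have e2 : ∫⁻ y3, ∫⁻ y1, ∫⁻ y2, ∫⁻ y4, JJ d y1 y2 y3 y4
      = ∫⁻ y3 in Set.Ioo (0:ℝ) 1, ENNReal.ofReal (y3 ^ ((4 - 5 * d) - 1) * (1 - y3) ^ ((1:ℝ)-1)) *
        ∫⁻ a, ∫⁻ b, ∫⁻ c, KK d a b c := by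
    refine lred measurableSet_Ioo (fun y hy => ?_) (fun y hy => ?_)
    · have : ∀ y1 y2 y4, JJ d y1 y2 y y4 = 0 := by
        intro y1 y2 y4
        by_contra h
        have := JJ_ne h
        exact hy ⟨by linarith, by linarith⟩
      simp [this]
    · have hy0 := hy.1
      rw [lscale _ hy0, ← lintegral_const_mul' _ _ ENNReal.ofReal_ne_top,
        ← lintegral_const_mul' _ _ ENNReal.ofReal_ne_top]
      refine lintegral_congr fun a => ?_
      rw [lscale _ hy0, ← lintegral_const_mul' _ _ ENNReal.ofReal_ne_top,
        ← lintegral_const_mul' _ _ ENNReal.ofReal_ne_top,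
        ← lintegral_const_mul' _ _ ENNReal.ofReal_ne_top]
      refine lintegral_congr fun b => ?_
      rw [lscale _ hy0, ← lintegral_const_mul' _ _ ENNReal.ofReal_ne_top,
        ← lintegral_const_mul' _ _ ENNReal.ofReal_ne_top,
        ← lintegral_const_mul' _ _ ENNReal.ofReal_ne_top,
        ← lintegral_const_mul' _ _ ENNReal.ofReal_ne_top]
      refine lintegral_congr fun c => ?_
      unfold JJ KK
      have hy1 : 0 < 1 - y := by linarith [hy.2]
      rw [← mul_sub y b a, ← mul_sub y c b, ← mul_sub y c a, show y - y * c = y * (1 - c) by ring,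
        show y - y * a = y * (1 - a) by ring, hk_mul hy0, hk_mul hy0, hk_mul hy0, hk_pos hy1,
        gk_mul hy0, gk_mul hy0, gk_mul hy0, gk_mul hy0, gk_pos hy0]
      have : ENNReal.ofReal (y ^ ((4 - 5 * d) - 1) * (1 - y) ^ ((1:ℝ)-1)) =
          ENNReal.ofReal y * ENNReal.ofReal y * ENNReal.ofReal y * ENNReal.ofReal (y ^ (-d))
          * ENNReal.ofReal (y ^ (-d)) * ENNReal.ofReal (y ^ (-d)) * ENNReal.ofReal (y ^ (-d))
          * ENNReal.ofReal (y ^ (-d)) := by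
        repeat rw [← ENNReal.ofReal_mul (by positivity)]
        congr 1
        rw [show (4 - 5 * d) - 1 = 1 + 1 + 1 + -d + -d + -d + -d + -d by ring]
        repeat rw [Real.rpow_add hy0]
        simp
      rw [this]
      ring
  rw [e2, lintegral_mul_const _ (by fun_prop), lint_beta (by linarith) one_pos]
  congr 2
  have h0 : 0 < 4 - 5 * d := by linarith
  have := Real.Gamma_pos_of_pos h0
  rw [Real.Gamma_add_one h0.ne', Real.Gamma_one]
  generalize 4 - 5 * d = a at *
  field_simp

noncomputable def TT (d β : ℝ) : ℝ≥0∞ :=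
  ∫⁻ x in Set.Ioo (0:ℝ) 1, ENNReal.ofReal (x ^ (1-2*d)) *
      ∫⁻ t in Set.Ioo (0:ℝ) 1, ENNReal.ofReal ((1 - t) ^ (-d) * (1 - x * t) ^ (-β))

lemma beta_conv {d : ℝ} (hd : d < 1) {c : ℝ} (hc : 0 < c) :
    ∫⁻ b, gk d b * gk d (c - b) = ENNReal.ofReal (c ^ (1 - 2 * d)) *
      ENNReal.ofReal (Real.Gamma (1-d) * Real.Gamma (1-d) / Real.Gamma ((1-d)+(1-d))) := by
  rw [lscale _ hc, ← lint_beta (by linarith) (by linarith),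
    ← lintegral_const_mul' _ _ ENNReal.ofReal_ne_top,
    ← lintegral_const_mul' _ _ ENNReal.ofReal_ne_top]
  refine lred measurableSet_Ioo (fun t ht => ?_) (fun t ht => ?_)
  · by_contra h
    simp only [mul_ne_zero_iff] at h
    rw [show c - c * t = c * (1 - t) by ring, gk_mul hc, gk_mul hc] at h
    simp only [mul_ne_zero_iff] at h
    have h1 := gk_ne h.2.1.2
    have h2 := gk_ne h.2.2.2
    exact ht ⟨h1, by linarith⟩
  · have h0 := ht.1
    have h1 : 0 < 1 - t := by linarith [ht.2]
    rw [show c - c * t = c * (1 - t) by ring, gk_mul hc, gk_mul hc, gk_pos h0, gk_pos h1]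
    repeat rw [← ENNReal.ofReal_mul (by positivity)]
    congr 1
    rw [show 1 - 2 * d = 1 + -d + -d by ring, Real.rpow_add hc, Real.rpow_add hc, Real.rpow_one,
      show 1 - d - 1 = -d by ring]
    ring

lemma P_eval {d : ℝ} (hd : d < 1) : ∫⁻ a, ∫⁻ b, ∫⁻ c, PP d a b c
    = ENNReal.ofReal (Real.Gamma (1-d) * Real.Gamma (1-d) / Real.Gamma ((1-d)+(1-d))) *
      TT d (2 * d - 1) := by
  unfold TT
  rw [← lintegral_const_mul' _ _ ENNReal.ofReal_ne_top, lrefl]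
  refine lred measurableSet_Ioo (fun e he => ?_) (fun e he => ?_)
  · have : ∀ b c, PP d (1 - e) b c = 0 := by
      intro b c
      by_contra h
      simp only [PP, mul_ne_zero_iff] at h
      have h1 := hk_ne h.1.1.1.1.1
      have h2 := gk_ne h.2
      exact he ⟨by linarith, by linarith⟩
    simp [this]
  · have he0 := he.1
    have he1 : 0 < 1 - e := by linarith [he.2]
    rw [lswap (by unfold PP; fun_prop), lrefl, lscale _ he0,
      ← lintegral_const_mul' _ _ ENNReal.ofReal_ne_top,
      ← lintegral_const_mul' _ _ ENNReal.ofReal_ne_top,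
      ← lintegral_const_mul' _ _ ENNReal.ofReal_ne_top]
    refine lred measurableSet_Ioo (fun t ht => ?_) (fun t ht => ?_)
    · have : ∀ b, PP d (1 - e) b (1 - e * t) = 0 := by
        intro b
        by_contra h
        simp only [PP, mul_ne_zero_iff] at h
        have h1 := h.1.1.1.1.2
        rw [show 1 - (1 - e * t) = e * t by ring, hk_mul he0] at h1
        have h2 := h.1.2
        rw [show 1 - e * t - (1 - e) = e * (1 - t) by ring, gk_mul he0] at h2
        simp only [mul_ne_zero_iff] at h2
        have := gk_ne h2.2
        exact ht ⟨hk_ne h1, by linarith⟩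
      simp [this]
    · have h0 := ht.1
      have h1 : 0 < 1 - t := by linarith [ht.2]
      have h2 : 0 < 1 - e * t := by nlinarith [ht.2, he.2]
      have : ∀ b, PP d (1 - e) b (1 - e * t) = ENNReal.ofReal (e ^ (-d) * (1 - t) ^ (-d) * e ^ (-d)) *
          (gk d b * gk d (1 - e * t - b)) := by
        intro b
        unfold PP
        rw [show 1 - (1 - e * t) = e * t by ring, hk_mul he0, hk_pos h0, hk_pos he1,
          show 1 - e * t - (1 - e) = e * (1 - t) by ring, gk_mul he0, gk_pos h1,
          show 1 - (1 - e) = e by ring, gk_pos he0, ENNReal.ofReal_mul (by positivity),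
          ENNReal.ofReal_mul (by positivity)]
        ring
      simp_rw [this]
      rw [lintegral_const_mul' _ _ ENNReal.ofReal_ne_top, beta_conv hd h2]
      have e1 : ENNReal.ofReal (e ^ (1-2*d)) = ENNReal.ofReal e * ENNReal.ofReal (e ^ (-d)) *
          ENNReal.ofReal (e ^ (-d)) := by
        repeat rw [← ENNReal.ofReal_mul (by positivity)]
        congr 1
        rw [show 1 - 2 * d = 1 + -d + -d by ring, Real.rpow_add he0, Real.rpow_add he0, Real.rpow_one]
      rw [e1, show -(2 * d - 1) = 1 - 2 * d by ring, ENNReal.ofReal_mul (by positivity),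
        ENNReal.ofReal_mul (by positivity), ENNReal.ofReal_mul (by positivity)]
      ring

lemma Z_eval (d : ℝ) : ∫⁻ a, ∫⁻ c, hk a * hk (1 - c) * gk d c * gk d (c - a) * gk d (1 - a)
    = TT d d := by
  unfold TT
  rw [lswap (by fun_prop)]
  refine lred measurableSet_Ioo (fun e he => ?_) (fun e he => ?_)
  · have : ∀ a, hk a * hk (1 - e) * gk d e * gk d (e - a) * gk d (1 - a) = 0 := by
      intro a
      by_contra h
      simp only [mul_ne_zero_iff] at h
      have h1 := hk_ne h.1.1.1.2
      have h2 := gk_ne h.1.1.2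
      exact he ⟨by linarith, by linarith⟩
    simp [this]
  · have he0 := he.1
    have he1 : 0 < 1 - e := by linarith [he.2]
    rw [lscale _ he0,
      ← lintegral_const_mul' _ _ ENNReal.ofReal_ne_top,
      ← lintegral_const_mul' _ _ ENNReal.ofReal_ne_top]
    refine lred measurableSet_Ioo (fun t ht => ?_) (fun t ht => ?_)
    · by_contra h
      simp only [mul_ne_zero_iff] at h
      have h1 := h.2.1.1.1.1
      rw [hk_mul he0] at h1
      have h2 := h.2.1.2
      rw [show e - e * t = e * (1 - t) by ring, gk_mul he0] at h2
      simp only [mul_ne_zero_iff] at h2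
      have := gk_ne h2.2
      exact ht ⟨hk_ne h1, by linarith⟩
    · have h0 := ht.1
      have h1 : 0 < 1 - t := by linarith [ht.2]
      have h2 : 0 < 1 - e * t := by nlinarith [ht.2, he.2]
      rw [hk_mul he0, hk_pos h0, hk_pos he1,
          show e - e * t = e * (1 - t) by ring, gk_mul he0, gk_pos h1, gk_pos he0, gk_pos h2]
      have e1 : ENNReal.ofReal (e ^ (1-2*d)) = ENNReal.ofReal e * ENNReal.ofReal (e ^ (-d)) *
          ENNReal.ofReal (e ^ (-d)) := by
        repeat rw [← ENNReal.ofReal_mul (by positivity)]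
        congr 1
        rw [show 1 - 2 * d = 1 + -d + -d by ring, Real.rpow_add he0, Real.rpow_add he0, Real.rpow_one]
      rw [e1, ENNReal.ofReal_mul (by positivity)]
      ring

lemma Q_eval {d : ℝ} (hd : d < 1) : ∫⁻ a, ∫⁻ b, ∫⁻ c, QQ d a b c
    = ENNReal.ofReal (Real.Gamma (1-d) * Real.Gamma (3-3*d) / Real.Gamma ((1-d)+(3-3*d))) *
      TT d d := by
  have hQ : Measurable fun p : ℝ × ℝ × ℝ => QQ d p.1 p.2.1 p.2.2 := by unfold QQ; fun_prop
  rw [lswap (meas2 hQ), ← lint_beta (by linarith) (by linarith),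
    ← lintegral_mul_const _ (by fun_prop)]
  refine lred measurableSet_Ioo (fun b hb => ?_) (fun b hb => ?_)
  · have : ∀ a c, QQ d a b c = 0 := by
      intro a c
      by_contra h
      simp only [QQ, mul_ne_zero_iff] at h
      have h1 := hk_ne h.1.1.1.1.1.2
      have h2 := gk_ne h.1.1.1.2
      have h3 := gk_ne h.2
      exact hb ⟨by linarith, by linarith⟩
    simp [this]
  · have h0 := hb.1
    have h1 : 0 < 1 - b := by linarith [hb.2]
    rw [← Z_eval, laffine _ b h1,
      ← lintegral_const_mul' _ _ ENNReal.ofReal_ne_top,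
      ← lintegral_const_mul' _ _ ENNReal.ofReal_ne_top]
    refine lintegral_congr fun a => ?_
    rw [laffine _ b h1,
      ← lintegral_const_mul' _ _ ENNReal.ofReal_ne_top,
      ← lintegral_const_mul' _ _ ENNReal.ofReal_ne_top,
      ← lintegral_const_mul' _ _ ENNReal.ofReal_ne_top]
    refine lintegral_congr fun c => ?_
    unfold QQ
    rw [show b + (1 - b) * a - b = (1 - b) * a by ring,
      show b + (1 - b) * c - b = (1 - b) * c by ring,
      show 1 - (b + (1 - b) * c) = (1 - b) * (1 - c) by ring,
      show 1 - (b + (1 - b) * a) = (1 - b) * (1 - a) by ring,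
      show b + (1 - b) * c - (b + (1 - b) * a) = (1 - b) * (c - a) by ring,
      hk_mul h1, hk_mul h1, gk_mul h1, gk_mul h1, gk_mul h1, gk_pos h0]
    by_cases ha : 0 < a
    · have e1 : ENNReal.ofReal (b ^ (1 - d - 1) * (1 - b) ^ (3 - 3 * d - 1)) =
          ENNReal.ofReal (1 - b) * ENNReal.ofReal (1 - b) * ENNReal.ofReal ((1 - b) ^ (-d)) *
          ENNReal.ofReal ((1 - b) ^ (-d)) * ENNReal.ofReal ((1 - b) ^ (-d)) *
          ENNReal.ofReal (b ^ (-d)) := by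
        repeat rw [← ENNReal.ofReal_mul (by positivity)]
        congr 1
        rw [show 3 - 3 * d - 1 = 1 + 1 + -d + -d + -d by ring, show 1 - d - 1 = -d by ring]
        repeat rw [Real.rpow_add h1]
        rw [Real.rpow_one]
        ring
      rw [hk_pos (show 0 < b + (1 - b) * a by positivity), hk_pos ha, e1]
      ring
    · have : hk a = 0 := if_neg ha
      rw [this]; simp

noncomputable def GG (d u v w s : ℝ) : ℝ :=
  u ^ (3 - 3 * d) * v ^ (2 - d) * (1 - u * v) ^ (-d) * (1 - v * w) ^ (-d) *
    (1 - u * v * w) ^ (-d) * (1 - s) ^ (-d) * (1 - v * s) ^ (-d)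

lemma J_eval (d : ℝ) : ∫⁻ u in Set.Ioo (0:ℝ) 1, ∫⁻ v in Set.Ioo (0:ℝ) 1,
    ∫⁻ w in Set.Ioo (0:ℝ) 1, ∫⁻ s in Set.Ioo w 1, ENNReal.ofReal (GG d u v w s)
    = ∫⁻ y1, ∫⁻ y2, ∫⁻ y3, ∫⁻ y4, JJ d y1 y2 y3 y4 := by
  symm
  rw [lrefl]
  refine lred measurableSet_Ioo (fun u hu => ?_) (fun u hu => ?_)
  · have : ∀ y2 y3 y4, JJ d (1 - u) y2 y3 y4 = 0 := by
      intro y2 y3 y4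
      by_contra h
      have := JJ_ne h
      exact hu ⟨by linarith, by linarith⟩
    simp [this]
  have hu0 := hu.1
  rw [lrefl, lscale _ hu0, ← lintegral_const_mul' _ _ ENNReal.ofReal_ne_top]
  refine lred measurableSet_Ioo (fun v hv => ?_) (fun v hv => ?_)
  · have : ∀ y3 y4, JJ d (1 - u) (1 - u * v) y3 y4 = 0 := by
      intro y3 y4
      by_contra h
      have := JJ_ne h
      refine hv ⟨?_, ?_⟩
      · have h : 0 < u * v := by linarith
        exact (mul_pos_iff_of_pos_left hu0).1 h
      · have h : 0 < u * (1 - v) := by linarith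
        have := (mul_pos_iff_of_pos_left hu0).1 h
        linarith
    simp [this]
  have hv0 := hv.1
  have huv : 0 < u * v := by positivity
  rw [lrefl, lscale _ huv, ← lintegral_const_mul' _ _ ENNReal.ofReal_ne_top,
    ← lintegral_const_mul' _ _ ENNReal.ofReal_ne_top]
  refine lred measurableSet_Ioo (fun w hw => ?_) (fun w hw => ?_)
  · have : ∀ y4, JJ d (1 - u) (1 - u * v) (1 - u * v * w) y4 = 0 := by
      intro y4
      by_contra h
      have := JJ_ne h
      refine hw ⟨?_, ?_⟩
      · have h : 0 < u * v * w := by linarith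
        exact (mul_pos_iff_of_pos_left huv).1 h
      · have h : 0 < u * v * (1 - w) := by linarith
        have := (mul_pos_iff_of_pos_left huv).1 h
        linarith
    simp [this]
  have hw0 := hw.1
  rw [lrefl, lscale _ huv, ← lintegral_const_mul' _ _ ENNReal.ofReal_ne_top,
    ← lintegral_const_mul' _ _ ENNReal.ofReal_ne_top,
    ← lintegral_const_mul' _ _ ENNReal.ofReal_ne_top]
  refine lred measurableSet_Ioo (fun s hs => ?_) (fun s hs => ?_)
  · have : JJ d (1 - u) (1 - u * v) (1 - u * v * w) (1 - u * v * s) = 0 := by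
      by_contra h
      have := JJ_ne h
      refine hs ⟨?_, ?_⟩
      · have h : 0 < u * v * (s - w) := by linarith
        have := (mul_pos_iff_of_pos_left huv).1 h
        linarith
      · have h : 0 < u * v * (1 - s) := by linarith
        have := (mul_pos_iff_of_pos_left huv).1 h
        linarith
    simp [this]
  have hu1 : 0 < 1 - u := by linarith [hu.2]
  have hv1 : 0 < 1 - v := by linarith [hv.2]
  have hw1 : 0 < 1 - w := by linarith [hw.2]
  have hs1 : 0 < 1 - s := by linarith [hs.2]
  have hs0 : 0 < s := by linarith [hs.1]
  have hsw : 0 < s - w := by linarith [hs.1]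
  have a1 : 0 < 1 - u * v := by nlinarith [mul_pos hu0 hv1]
  have a2 : 0 < 1 - v * w := by nlinarith [mul_pos hv0 hw1]
  have a3 : 0 < 1 - u * v * w := by nlinarith [mul_pos huv hw1]
  have a4 : 0 < 1 - v * s := by nlinarith [mul_pos hv0 hs1]
  unfold JJ
  rw [show 1 - u * v - (1 - u) = u * (1 - v) by ring,
    show 1 - u * v * w - (1 - u * v * s) = u * v * (s - w) by ring,
    show 1 - (1 - u * v * w) = u * v * w by ring,
    show 1 - u * v * s - (1 - u * v) = u * (v * (1 - s)) by ring,
    show 1 - u * v * s - (1 - u) = u * (1 - v * s) by ring,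
    show 1 - u * v * w - (1 - u) = u * (1 - v * w) by ring,
    hk_pos hu1, hk_pos (by positivity), hk_pos (by positivity), hk_pos (by positivity),
    gk_mul hu0, gk_mul hu0, gk_mul hu0, gk_mul hv0, gk_pos a1, gk_pos a2, gk_pos a3, gk_pos a4,
    gk_pos hs1]
  simp only [one_mul]
  repeat rw [← ENNReal.ofReal_mul (by positivity)]
  congr 1
  unfold GG
  rw [show 3 - 3 * d = 1 + 1 + 1 + -d + -d + -d by ring, show 2 - d = 1 + 1 + -d by ring]
  repeat rw [Real.rpow_add hu0]
  repeat rw [Real.rpow_add hv0]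
  rw [Real.rpow_one, Real.rpow_one]
  ring

lemma leaf {d : ℝ} (hd0 : 0 ≤ d) (hd : d < 1) {u v w : ℝ} (hu : u ∈ Set.Ioo (0:ℝ) 1)
    (hv : v ∈ Set.Ioo (0:ℝ) 1) (hw : w ∈ Set.Ioo (0:ℝ) 1) :
    u ^ (3 - 3 * d) * v ^ (2 - d) * (1 - u * v) ^ (-d) * (1 - v * w) ^ (-(2 * d)) *
          (1 - u * v * w) ^ (-d) * (1 - w) ^ (1 - d) *
          hyp2F1 1 d (2 - d) (v * (1 - w) / (1 - v * w))
    = (ENNReal.ofReal (1 - d) *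
        ∫⁻ s, hk (s - w) * hk (1 - s) * ENNReal.ofReal (GG d u v w s)).toReal := by
  have hu0 := hu.1
  have hv0 := hv.1
  have hw0 := hw.1
  have hu1 : 0 < 1 - u := by linarith [hu.2]
  have hv1 : 0 < 1 - v := by linarith [hv.2]
  have hw1 : 0 < 1 - w := by linarith [hw.2]
  have a1 : 0 < 1 - u * v := by nlinarith [mul_pos hu0 hv1]
  have a2 : 0 < 1 - v * w := by nlinarith [mul_pos hv0 hw1]
  have a3 : 0 < 1 - u * v * w := by nlinarith [mul_pos (mul_pos hu0 hv0) hw1]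
  have hd1 : 0 < 1 - d := by linarith
  set z := v * (1 - w) / (1 - v * w) with hz
  have hz0 : 0 ≤ z := by positivity
  have hz1 : z < 1 := by rw [hz, div_lt_one a2]; nlinarith
  obtain ⟨hE0, hE⟩ := euler_rep hd (show -1 ≤ d by linarith) (show d < 2 - d by linarith) hz0 hz1
  set C := u ^ (3 - 3 * d) * v ^ (2 - d) * (1 - u * v) ^ (-d) * (1 - v * w) ^ (-d) *
    (1 - u * v * w) ^ (-d) * (1 - w) ^ (-d) * (1 - v * w) ^ (-d) with hC
  have hC0 : 0 ≤ C := by positivity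
  have key : ∫⁻ s, hk (s - w) * hk (1 - s) * ENNReal.ofReal (GG d u v w s)
      = ENNReal.ofReal (1 - w) * (ENNReal.ofReal C * ENNReal.ofReal (hyp2F1 1 d (2-d) z / (1-d))) := by
    rw [laffine _ w hw1, ← hE]
    congr 1
    rw [← lintegral_const_mul' _ _ ENNReal.ofReal_ne_top]
    refine lred measurableSet_Ioo (fun t ht => ?_) (fun t ht => ?_)
    · by_contra h
      rw [show w + (1 - w) * t - w = (1 - w) * t by ring,
        show 1 - (w + (1 - w) * t) = (1 - w) * (1 - t) by ring, hk_mul hw1, hk_mul hw1] at h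
      simp only [mul_ne_zero_iff] at h
      have h1 := hk_ne h.1.1
      have h2 := hk_ne h.1.2
      exact ht ⟨h1, by linarith⟩
    · have ht0 := ht.1
      have ht1 : 0 < 1 - t := by linarith [ht.2]
      have hzt : 0 < 1 - z * t := by nlinarith
      rw [show w + (1 - w) * t - w = (1 - w) * t by ring,
        show 1 - (w + (1 - w) * t) = (1 - w) * (1 - t) by ring, hk_mul hw1, hk_mul hw1,
        hk_pos ht0, hk_pos ht1, one_mul, one_mul, ← ENNReal.ofReal_mul hC0]
      congr 1
      unfold GG
      have e : 1 - v * (w + (1 - w) * t) = (1 - v * w) * (1 - z * t) := by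
        rw [hz]; field_simp; ring
      rw [e, show 1 - (w + (1 - w) * t) = (1 - w) * (1 - t) by ring,
        Real.mul_rpow hw1.le ht1.le, Real.mul_rpow a2.le hzt.le, hC]
      ring
  rw [key, ← ENNReal.ofReal_mul hC0, ← ENNReal.ofReal_mul hw1.le, ← ENNReal.ofReal_mul hd1.le,
    ENNReal.toReal_ofReal (by positivity), hC, show -(2 * d) = -d + -d by ring, Real.rpow_add a2,
    show 1 - d = 1 + -d by ring, Real.rpow_add hw1, Real.rpow_one]
  have : 1 + -d ≠ 0 := by linarith
  field_simp

lemma triple {f : ℝ → ℝ → ℝ → ℝ} {E : ℝ → ℝ → ℝ → ℝ≥0∞}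
    (hE : Measurable fun p : ℝ × ℝ × ℝ => E p.1 p.2.1 p.2.2)
    (hf : ∀ u ∈ Set.Ioo (0:ℝ) 1, ∀ v ∈ Set.Ioo (0:ℝ) 1, ∀ w ∈ Set.Ioo (0:ℝ) 1,
      f u v w = (E u v w).toReal)
    (hfin : ∫⁻ u in Set.Ioo (0:ℝ) 1, ∫⁻ v in Set.Ioo (0:ℝ) 1, ∫⁻ w in Set.Ioo (0:ℝ) 1, E u v w ≠ ∞) :
    ∫ u in (0:ℝ)..1, ∫ v in (0:ℝ)..1, ∫ w in (0:ℝ)..1, f u v w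
    = (∫⁻ u in Set.Ioo (0:ℝ) 1, ∫⁻ v in Set.Ioo (0:ℝ) 1, ∫⁻ w in Set.Ioo (0:ℝ) 1, E u v w).toReal := by
  have hI : ∀ g : ℝ → ℝ, ∫ u in (0:ℝ)..1, g u = ∫ u in Set.Ioo (0:ℝ) 1, g u := fun g => by
    rw [intervalIntegral.integral_of_le zero_le_one, integral_Ioc_eq_integral_Ioo]
  have m2 : Measurable fun p : ℝ × ℝ => ∫⁻ w in Set.Ioo (0:ℝ) 1, E p.1 p.2 w := by
    apply Measurable.lintegral_prod_right (f := fun (p : ℝ × ℝ) b => E p.1 p.2 b)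
    exact hE.comp (g := fun p : ℝ × ℝ × ℝ => E p.1 p.2.1 p.2.2)
      (f := fun q : (ℝ × ℝ) × ℝ => (q.1.1, q.1.2, q.2)) (by fun_prop)
  have m1 : Measurable fun u => ∫⁻ v in Set.Ioo (0:ℝ) 1, ∫⁻ w in Set.Ioo (0:ℝ) 1, E u v w :=
    Measurable.lintegral_prod_right m2
  have fin1 := ae_lt_top m1 hfin
  simp only [hI]
  rw [← integral_toReal m1.aemeasurable fin1]
  refine integral_congr_ae ?_
  filter_upwards [fin1, ae_restrict_mem measurableSet_Ioo] with u hu hu'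
  have m2' : Measurable fun v => ∫⁻ w in Set.Ioo (0:ℝ) 1, E u v w :=
    m2.comp (f := fun v => (u, v)) (by fun_prop)
  have fin2 := ae_lt_top m2' hu.ne
  rw [← integral_toReal m2'.aemeasurable fin2]
  refine integral_congr_ae ?_
  filter_upwards [fin2, ae_restrict_mem measurableSet_Ioo] with v hv hv'
  have m3' : Measurable fun w => E u v w :=
    hE.comp (f := fun w => (u, v, w)) (by fun_prop)
  have fin3 := ae_lt_top m3' hv.ne
  rw [← integral_toReal m3'.aemeasurable fin3]
  refine integral_congr_ae ?_
  filter_upwards [ae_restrict_mem measurableSet_Ioo] with w hw'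
  exact hf u hu' v hv' w hw'

theorem triple_integral_I1 (d : ℝ) (hd0 : 0 ≤ d) (hd1 : d < 4 / 5) :
    1 / (d - 1) *
      (∫ u in (0:ℝ)..1, ∫ v in (0:ℝ)..1, ∫ w in (0:ℝ)..1,
        u ^ (3 - 3 * d) * v ^ (2 - d) * (1 - u * v) ^ (-d) * (1 - v * w) ^ (-(2 * d)) *
          (1 - u * v * w) ^ (-d) * (1 - w) ^ (1 - d) *
          hyp2F1 1 d (2 - d) (v * (1 - w) / (1 - v * w)))
    = Real.Gamma (1 - d) / ((1 - d) * (2 - 2 * d)) *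
        (Real.Gamma (3 - 3 * d) * Real.Gamma (4 - 5 * d) /
          (Real.Gamma (4 - 4 * d) * Real.Gamma (5 - 5 * d))) *
        hyp3F2 (2 - 2 * d) 1 d (3 - 2 * d) (2 - d) 1
      - Real.Gamma (1 - d) ^ 3 * Real.Gamma (4 - 5 * d) /
          (Real.Gamma (3 - 2 * d) * Real.Gamma (2 - d) * Real.Gamma (5 - 5 * d)) *
          hyp3F2 (2 - 2 * d) 1 (2 * d - 1) (3 - 2 * d) (2 - d) 1 := by
  have hd : d < 1 := by linarith
  obtain ⟨n1, t1⟩ := T_eval hd (show -1 ≤ d by linarith) (show d < 2 - d by linarith)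
  obtain ⟨n2, t2⟩ := T_eval hd (show -1 ≤ 2 * d - 1 by linarith) (show 2 * d - 1 < 2 - d by linarith)
  have hP := P_eval hd
  have hQ := Q_eval hd
  unfold TT at hP hQ
  rw [t2] at hP
  rw [t1] at hQ
  set F1 := hyp3F2 (2 - 2 * d) 1 d (3 - 2 * d) (2 - d) 1
  set F2 := hyp3F2 (2 - 2 * d) 1 (2 * d - 1) (3 - 2 * d) (2 - d) 1
  have g1 : 0 < Real.Gamma (1 - d) := Real.Gamma_pos_of_pos (by linarith)
  have g2 : 0 < Real.Gamma (2 - 2 * d) := Real.Gamma_pos_of_pos (by linarith)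
  have g3 : 0 < Real.Gamma (3 - 3 * d) := Real.Gamma_pos_of_pos (by linarith)
  have g4 : 0 < Real.Gamma (4 - 4 * d) := Real.Gamma_pos_of_pos (by linarith)
  have g5 : 0 < Real.Gamma (4 - 5 * d) := Real.Gamma_pos_of_pos (by linarith)
  rw [show 1 - d + (1 - d) = 2 - 2 * d by ring, ← ENNReal.ofReal_mul (by positivity)] at hP
  rw [show 1 - d + (3 - 3 * d) = 4 - 4 * d by ring, ← ENNReal.ofReal_mul (by positivity)] at hQ
  have hKQ := K_add_Q d
  rw [hP, hQ] at hKQ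
  set K := ∫⁻ a, ∫⁻ b, ∫⁻ c, KK d a b c with hK
  have hKfin : K ≠ ∞ := fun h => by
    rw [h, top_add] at hKQ; exact ENNReal.ofReal_ne_top hKQ.symm
  have o1 : 0 < 1 - d := by linarith
  have o2 : 0 < 4 - 5 * d := by linarith
  have o3 : 0 < 2 - 2 * d := by linarith
  have hKr : K.toReal = Real.Gamma (1 - d) * Real.Gamma (1 - d) / Real.Gamma (2 - 2 * d) *
        (F2 / (2 - 2 * d) / (1 - d)) - Real.Gamma (1 - d) * Real.Gamma (3 - 3 * d) /
        Real.Gamma (4 - 4 * d) * (F1 / (2 - 2 * d) / (1 - d)) := by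
    have h := congrArg ENNReal.toReal hKQ
    rw [ENNReal.toReal_add hKfin ENNReal.ofReal_ne_top, ENNReal.toReal_ofReal (by positivity),
      ENNReal.toReal_ofReal (by positivity)] at h
    linarith
  have hset : ∀ u v w : ℝ, ∫⁻ s, hk (s - w) * hk (1 - s) * ENNReal.ofReal (GG d u v w s)
      = ∫⁻ s in Set.Ioo w 1, ENNReal.ofReal (GG d u v w s) := by
    intro u v w
    refine lred measurableSet_Ioo (fun s hs => ?_) (fun s hs => ?_)
    · by_contra h
      simp only [mul_ne_zero_iff] at h
      have h1 := hk_ne h.1.1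
      have h2 := hk_ne h.1.2
      exact hs ⟨by linarith, by linarith⟩
    · rw [hk_pos (by linarith [hs.1]), hk_pos (by linarith [hs.2]), one_mul, one_mul]
  have htot : ∫⁻ u in Set.Ioo (0:ℝ) 1, ∫⁻ v in Set.Ioo (0:ℝ) 1, ∫⁻ w in Set.Ioo (0:ℝ) 1,
      (ENNReal.ofReal (1 - d) *
        ∫⁻ s, hk (s - w) * hk (1 - s) * ENNReal.ofReal (GG d u v w s))
      = ENNReal.ofReal (1 - d) * (ENNReal.ofReal (1 / (4 - 5 * d)) * K) := by
    simp_rw [hset, lintegral_const_mul' _ _ ENNReal.ofReal_ne_top]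
    rw [J_eval, JK hd1]
  have hmeas : Measurable fun p : ℝ × ℝ × ℝ => ENNReal.ofReal (1 - d) *
        ∫⁻ s, hk (s - p.2.2) * hk (1 - s) * ENNReal.ofReal (GG d p.1 p.2.1 p.2.2 s) := by
    refine Measurable.const_mul ?_ _
    apply Measurable.lintegral_prod_right (f := fun (p : ℝ × ℝ × ℝ) s =>
      hk (s - p.2.2) * hk (1 - s) * ENNReal.ofReal (GG d p.1 p.2.1 p.2.2 s))
    unfold GG Function.uncurry
    fun_prop
  rw [triple (E := fun u v w => ENNReal.ofReal (1 - d) *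
        ∫⁻ s, hk (s - w) * hk (1 - s) * ENNReal.ofReal (GG d u v w s)) hmeas
    (fun u hu v hv w hw => leaf hd0 hd hu hv hw)
    (by rw [htot]; exact ENNReal.mul_ne_top ENNReal.ofReal_ne_top
          (ENNReal.mul_ne_top ENNReal.ofReal_ne_top hKfin)), htot, ENNReal.toReal_mul,
    ENNReal.toReal_mul, ENNReal.toReal_ofReal o1.le, ENNReal.toReal_ofReal (by positivity), hKr]
  have r1 : Real.Gamma (5 - 5 * d) = (4 - 5 * d) * Real.Gamma (4 - 5 * d) := by
    rw [← Real.Gamma_add_one o2.ne']; congr 1; ring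
  have r2 : Real.Gamma (3 - 2 * d) = (2 - 2 * d) * Real.Gamma (2 - 2 * d) := by
    rw [← Real.Gamma_add_one o3.ne']; congr 1; ring
  have r3 : Real.Gamma (2 - d) = (1 - d) * Real.Gamma (1 - d) := by
    rw [← Real.Gamma_add_one o1.ne']; congr 1; ring
  rw [r1, r2, r3, show d - 1 = -(1 - d) by ring]
  generalize Real.Gamma (1 - d) = x1 at *
  generalize Real.Gamma (2 - 2 * d) = x2 at *
  generalize Real.Gamma (3 - 3 * d) = x3 at *
  generalize Real.Gamma (4 - 4 * d) = x4 at *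
  generalize Real.Gamma (4 - 5 * d) = x5 at *
  clear_value F1 F2 K
  generalize 2 - 2 * d = y2 at *
  generalize 4 - 5 * d = y3 at *
  generalize 1 - d = y1 at *
  field_simp
  ring
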